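/- Let P = (X, ≺) be a poset on |X| = n elements, let A_P = (X, L) be the corresponding poset antimatroid, let ω : X → ℝ_{>0} be a positive weight function satisfying the cover monotonicity property (CM), and fix an integer 1 ≤ k < n. Then L_ω(k)² = L_ω(k−1)·L_ω(k+1) if and only if there exists s > 0 such that for every feasible word α ∈ L of length k−1 and every x ∈ Cnt(α): (AE1) Σ_{x' ∈ Cnt(α)} ω(x') = s; (AE2) Des_α(x) = Cov(x); and (AE3) Σ_{y ∈ Cov(x)} ω(y) = ω(x). -/

import Mathlib

open scoped Classical BigOperators

noncomputable section

variable {X : Type*} [Fintype X] [DecidableEq X] [PartialOrder X]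

/-- A feasible word of the poset antimatroid of `(X, ≺)`: a simple word such that every
letter is preceded by all elements below it in the poset. -/
def FeasibleWord (α : List X) : Prop :=
  α.Nodup ∧ ∀ (l₁ l₂ : List X) (x : X), α = l₁ ++ x :: l₂ → ∀ y : X, y < x → y ∈ l₁

/-- All words of length `k` over the alphabet `X`. -/
def wordsLen (X : Type*) [Fintype X] [DecidableEq X] (k : ℕ) : Finset (List X) :=
  (Finset.univ : Finset (Fin k → X)).image List.ofFn

/-- The weighted count `L_ω(k) = Σ_{α ∈ L_k} Π_{x ∈ α} ω(x)` over feasible words of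
length `k`. -/
def Lw (ω : X → ℝ) (k : ℕ) : ℝ :=
  ∑ α ∈ (wordsLen X k).filter (fun α => FeasibleWord α), (α.map ω).prod

/-- The set `Cov(x)` of elements covering `x` in the poset. -/
def covers (x : X) : Finset X := Finset.univ.filter (fun y => x ⋖ y)

/-- The set `Cnt(α)` of continuations of a feasible word `α`. -/
def CntA (α : List X) : Finset X :=
  Finset.univ.filter (fun x => FeasibleWord (α ++ [x]))

/-- The set `Des_α(x)` of descendants of `x` with respect to `α`. -/
def DesA (α : List X) (x : X) : Finset X :=
  Finset.univ.filter (fun y => FeasibleWord (α ++ [x, y]) ∧ ¬ FeasibleWord (α ++ [y]))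

/-!
Write `N m I` for the total weight of the words of length `m` that extend a feasible word with
letter set `I`. The numbers `N m I`, `N (m + 1) I`, `N (m + 2) I` are the values on two fixed
vectors of a symmetric bilinear form `B m I`, so log-concavity is a reverse Cauchy–Schwarz
inequality for `B m I`, which holds if `B m I` has only one positive direction.

For `m = 0` this is an ordinary Cauchy–Schwarz inequality whose weights are the deficits
`ω x - ∑ ω y`, with `y` ranging over the descendants of `x`; (CM) makes them nonnegative. For the
induction on `m`, exchanging the first two letters of a word shows that `B (m + 1) I` is bounded
above by a weighted sum of pull-backs of the forms `B m (I ∪ {x})`. Since the matrix of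
`B (m + 1) I` on the coordinate vectors has positive off-diagonal entries, its graph Laplacian is
positive semidefinite with only the constants in its kernel, and this turns the bound into
hyperbolicity.

In the case of equality, the null vector of `B (m + 1) I` is passed on to each `B m (I ∪ {x})`, and
hence along all feasible words of length `k - 1` down to `m = 0`, where it forces
`N 2 I = (N 1 I) ^ 2`, i.e. all deficits vanish, with the same value `s = N 1 I` for every word.
-/

section WeightedLaplacian

open scoped Matrix

variable {ι : Type*} [Fintype ι] [DecidableEq ι]

/-- The Laplacian `D - A` of the graph on `ι` with edge weights `A`, where `D` is the diagonal
matrix of the row sums of `A`. The diagonal entries of `A` cancel. -/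
def weightedLaplacian (A : Matrix ι ι ℝ) : Matrix ι ι ℝ :=
  Matrix.diagonal (A *ᵥ 1) - A

lemma weightedLaplacian_mulVec_eq_sub (A : Matrix ι ι ℝ) (h : ι → ℝ) (x : ι) :
    (weightedLaplacian A *ᵥ h) x = (∑ y, A x y) * h x - ∑ y, A x y * h y := by
  rw [weightedLaplacian, Matrix.sub_mulVec, Pi.sub_apply, Matrix.mulVec_diagonal]
  simp [Matrix.mulVec, dotProduct]

lemma weightedLaplacian_mulVec_apply (A : Matrix ι ι ℝ) (h : ι → ℝ) (x : ι) :
    (weightedLaplacian A *ᵥ h) x = ∑ y, A x y * (h x - h y) := by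
  simp only [weightedLaplacian_mulVec_eq_sub, mul_sub, Finset.sum_sub_distrib, Finset.sum_mul]

variable {A : Matrix ι ι ℝ} (hA : A.IsSymm)
include hA

lemma weightedLaplacian_isSymm : (weightedLaplacian A).IsSymm :=
  (Matrix.isSymm_diagonal _).sub hA

lemma two_mul_dotProduct_weightedLaplacian_mulVec (h : ι → ℝ) :
    2 * (h ⬝ᵥ weightedLaplacian A *ᵥ h) = ∑ x, ∑ y, A x y * (h x - h y) ^ 2 := by
  have hrow : h ⬝ᵥ weightedLaplacian A *ᵥ h = ∑ x, ∑ y, A x y * (h x * (h x - h y)) := by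
    simp only [dotProduct, weightedLaplacian_mulVec_apply, Finset.mul_sum, mul_left_comm]
  have hcol : h ⬝ᵥ weightedLaplacian A *ᵥ h = ∑ x, ∑ y, A x y * (h y * (h y - h x)) := by
    rw [hrow, Finset.sum_comm]
    simp only [hA.apply]
  rw [two_mul]
  nth_rw 1 [hrow]
  rw [hcol]
  simp only [← Finset.sum_add_distrib]
  exact Finset.sum_congr rfl fun x _ => Finset.sum_congr rfl fun y _ => by ring

omit [Fintype ι] [DecidableEq ι] hA in
lemma weight_mul_sub_sq_nonneg (hnonneg : ∀ x y, x ≠ y → 0 ≤ A x y) (h : ι → ℝ) (x y : ι) :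
    0 ≤ A x y * (h x - h y) ^ 2 := by
  rcases eq_or_ne x y with rfl | hxy
  · simp
  · exact mul_nonneg (hnonneg x y hxy) (sq_nonneg _)

lemma dotProduct_weightedLaplacian_mulVec_nonneg (hnonneg : ∀ x y, x ≠ y → 0 ≤ A x y)
    (h : ι → ℝ) : 0 ≤ h ⬝ᵥ weightedLaplacian A *ᵥ h := by
  have hsum : 0 ≤ ∑ x, ∑ y, A x y * (h x - h y) ^ 2 := Finset.sum_nonneg fun x _ =>
    Finset.sum_nonneg fun y _ => weight_mul_sub_sq_nonneg hnonneg h x y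
  linarith [two_mul_dotProduct_weightedLaplacian_mulVec hA h]

variable (hpos : ∀ x y, x ≠ y → 0 < A x y)
include hpos

lemma eq_of_dotProduct_weightedLaplacian_mulVec_eq_zero {h : ι → ℝ}
    (h0 : h ⬝ᵥ weightedLaplacian A *ᵥ h = 0) (x y : ι) : h x = h y := by
  by_contra hne
  have hterm := weight_mul_sub_sq_nonneg (fun x y hxy => (hpos x y hxy).le) h
  have hlt : 0 < ∑ x, ∑ y, A x y * (h x - h y) ^ 2 :=
    Finset.sum_pos' (fun x _ => Finset.sum_nonneg fun y _ => hterm x y)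
      ⟨x, Finset.mem_univ x, Finset.sum_pos' (fun y _ => hterm x y)
        ⟨y, Finset.mem_univ y, mul_pos (hpos x y (ne_of_apply_ne h hne))
          (sq_pos_of_ne_zero (sub_ne_zero.2 hne))⟩⟩
  linarith [two_mul_dotProduct_weightedLaplacian_mulVec hA h]

lemma weightedLaplacian_mulVec_eq_zero_of_dotProduct_eq_zero {h : ι → ℝ}
    (h0 : h ⬝ᵥ weightedLaplacian A *ᵥ h = 0) : weightedLaplacian A *ᵥ h = 0 := by
  ext x
  rw [weightedLaplacian_mulVec_apply]
  exact Finset.sum_eq_zero fun y _ => by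
    rw [eq_of_dotProduct_weightedLaplacian_mulVec_eq_zero hA hpos h0 x y, sub_self, mul_zero]

-- The range of a symmetric operator is the orthogonal complement of its kernel, here the constants.
lemma exists_weightedLaplacian_mulVec_eq {β : ι → ℝ} (hβ : ∑ x, β x = 0) :
    ∃ h, weightedLaplacian A *ᵥ h = β := by
  set L := (weightedLaplacian A).toEuclideanLin
  have hLsymm : L.IsSymmetric :=
    Matrix.isSymmetric_toEuclideanLin_iff.2 (weightedLaplacian_isSymm hA)
  have hβL : WithLp.toLp 2 β ∈ L.range := by
    rw [← L.range.orthogonal_orthogonal, hLsymm.orthogonal_range]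
    intro u hu
    have hu0 : weightedLaplacian A *ᵥ u.ofLp = 0 := congrArg WithLp.ofLp (LinearMap.mem_ker.1 hu)
    have hconst : ∀ x y, u x = u y :=
      eq_of_dotProduct_weightedLaplacian_mulVec_eq_zero hA hpos (by rw [hu0, dotProduct_zero])
    rw [PiLp.inner_apply]
    rcases isEmpty_or_nonempty ι with _ | ⟨⟨x₀⟩⟩
    · simp
    · simp [fun x => hconst x x₀, ← Finset.sum_mul, hβ]
  obtain ⟨h, hh⟩ := hβL
  exact ⟨h.ofLp, congrArg WithLp.ofLp hh⟩

end WeightedLaplacian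

section Hyperbolic

open scoped Matrix

variable {V : Type*} [AddCommGroup V] [Module ℝ V] {B : LinearMap.BilinForm ℝ V} {v : V}

/-- `B` is negative semidefinite on the `B`-orthogonal complement of `v`. If `B v v > 0`, this says
that `B` has exactly one positive direction. -/
def IsHyperbolicAlong (B : LinearMap.BilinForm ℝ V) (v : V) : Prop :=
  ∀ u, B v u = 0 → B u u ≤ 0

/-- `u` is an isotropic vector of `B` orthogonal to `v`: a case of equality in the condition that
`B` be hyperbolic along `v`. -/
def IsNullAlong (B : LinearMap.BilinForm ℝ V) (v u : V) : Prop :=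
  B v u = 0 ∧ B u u = 0

lemma IsHyperbolicAlong.apply_self_le_sq_div (hv : IsHyperbolicAlong B v) (hB : B.IsSymm)
    (hpos : 0 < B v v) (u : V) : B u u ≤ B v u ^ 2 / B v v := by
  have horth : B v (u - (B v u / B v v) • v) = 0 := by
    simp [div_mul_cancel₀ _ hpos.ne']
  have hexpand : B (u - (B v u / B v v) • v) (u - (B v u / B v v) • v)
      = B u u - B v u ^ 2 / B v v := by
    simp only [map_sub, LinearMap.sub_apply, map_smul, LinearMap.smul_apply, smul_eq_mul,
      hB.eq u v]
    field_simp
    ring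
  linarith [hv _ horth]

variable {ι : Type*} [Fintype ι] [DecidableEq ι] {e : ι → V} (hB : B.IsSymm)
  (hv : B v = ∑ x, B (e x))
include hB

omit [Fintype ι] [DecidableEq ι] in
lemma gram_isSymm : (Matrix.of fun x y => B (e x) (e y)).IsSymm :=
  Matrix.IsSymm.ext fun x y => hB.eq (e y) (e x)

include hv

-- Test the hypothesis on `u + ∑ x, h x • e x`, whose pairing with `e x` is `h x * B (e x) v`.
lemma apply_self_le_neg_dotProduct_weightedLaplacian
    (hle : ∀ u, B u u ≤ ∑ x, B (e x) u ^ 2 / B (e x) v) {u : V} {h : ι → ℝ}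
    (hh : weightedLaplacian (.of fun x y => B (e x) (e y)) *ᵥ h = fun x => B (e x) u) :
    B u u ≤ -(h ⬝ᵥ weightedLaplacian (.of fun x y => B (e x) (e y)) *ᵥ h) := by
  have hrow (x : ι) : ∑ y, B (e x) (e y) = B (e x) v := by
    simp [hB.eq (e x), hv]
  set g := u + ∑ x, h x • e x with hg
  have heg (x : ι) : B (e x) g = B (e x) v * h x := by
    have := congrFun hh x
    rw [weightedLaplacian_mulVec_eq_sub] at this
    simp only [Matrix.of_apply, hrow] at this
    simp only [hg, map_add, map_sum, map_smul, smul_eq_mul, ← this, mul_comm (h _)]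
    ring
  have hug : B u g = B u u + h ⬝ᵥ fun x => B (e x) u := by
    simp [hg, dotProduct, hB.eq u]
  have hgg : B g g = B u g + ∑ x, h x * (B (e x) v * h x) := by
    simp only [← heg]
    nth_rw 1 [hg]
    simp [LinearMap.sum_apply]
  have hbound := hle g
  have hterm (x : ι) : B (e x) g ^ 2 / B (e x) v = h x * (B (e x) v * h x) := by
    rw [heg]
    rcases eq_or_ne (B (e x) v) 0 with h0 | h0
    · simp [h0]
    · field_simp
  simp only [hterm] at hbound
  rw [hh]
  linarith

variable (hpos : ∀ x y, x ≠ y → 0 < B (e x) (e y))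
include hpos

lemma exists_weightedLaplacian_mulVec_eq_apply {u : V} (hu : B v u = 0) :
    ∃ h : ι → ℝ, weightedLaplacian (.of fun x y => B (e x) (e y)) *ᵥ h = fun x => B (e x) u :=
  exists_weightedLaplacian_mulVec_eq (gram_isSymm hB) hpos (by simpa [hv] using hu)

variable (hle : ∀ u, B u u ≤ ∑ x, B (e x) u ^ 2 / B (e x) v)
include hle

omit [DecidableEq ι] in
theorem isHyperbolicAlong_of_apply_self_le_sum : IsHyperbolicAlong B v := by
  intro u hu
  obtain ⟨h, hh⟩ := exists_weightedLaplacian_mulVec_eq_apply hB hv hpos hu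
  exact (apply_self_le_neg_dotProduct_weightedLaplacian hB hv hle hh).trans
    (neg_nonpos.2 (dotProduct_weightedLaplacian_mulVec_nonneg (gram_isSymm hB)
      (fun x y hxy => (hpos x y hxy).le) h))

omit [DecidableEq ι] in
theorem IsNullAlong.apply_eq_zero {u : V} (hu : IsNullAlong B v u) (x : ι) : B (e x) u = 0 := by
  obtain ⟨h, hh⟩ := exists_weightedLaplacian_mulVec_eq_apply hB hv hpos hu.1
  have hle0 := apply_self_le_neg_dotProduct_weightedLaplacian hB hv hle hh
  have hnonneg := dotProduct_weightedLaplacian_mulVec_nonneg (gram_isSymm hB)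
    (fun x y hxy => (hpos x y hxy).le) h
  have hLh := weightedLaplacian_mulVec_eq_zero_of_dotProduct_eq_zero (gram_isSymm hB) hpos
    (h := h) (by linarith [hu.2])
  exact congrFun (hh.symm.trans hLh) x

end Hyperbolic

section OffDiagonalSums

variable {ι : Type*} [DecidableEq ι]

lemma sum_sum_erase_comm {M : Type*} [AddCommMonoid M] (s : Finset ι) (f : ι → ι → M) :
    ∑ x ∈ s, ∑ y ∈ s.erase x, f x y = ∑ x ∈ s, ∑ y ∈ s.erase x, f y x := by
  refine Finset.sum_comm' fun x y => ?_
  simp only [Finset.mem_erase]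
  tauto

lemma sum_sum_erase_nonneg {s : Finset ι} {f : ι → ι → ℝ}
    (hf : ∀ x ∈ s, ∀ y ∈ s, x ≠ y → 0 ≤ f x y + f y x) :
    0 ≤ ∑ x ∈ s, ∑ y ∈ s.erase x, f x y := by
  have hsum : 0 ≤ ∑ x ∈ s, ∑ y ∈ s.erase x, (f x y + f y x) :=
    Finset.sum_nonneg fun x hx => Finset.sum_nonneg fun y hy =>
      hf x hx y (Finset.mem_of_mem_erase hy) (Finset.ne_of_mem_erase hy).symm
  simp only [Finset.sum_add_distrib, ← sum_sum_erase_comm s f] at hsum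
  linarith

end OffDiagonalSums

section Continuations

variable {I : Finset X} {x y z : X}

/-- The elements that can be appended to a feasible word with letter set `I`: the minimal elements
of the complement of `I`, when `I` is a lower set. -/
def continuations (I : Finset X) : Finset X :=
  Finset.univ.filter fun x => x ∉ I ∧ ∀ y < x, y ∈ I

/-- The continuations of `I ∪ {x}` that are not continuations of `I`. -/
def descendants (I : Finset X) (x : X) : Finset X :=
  continuations (insert x I) \ continuations I

lemma mem_continuations : x ∈ continuations I ↔ x ∉ I ∧ ∀ y < x, y ∈ I := by
  simp [continuations]

lemma continuations_insert (I : Finset X) (x : X) :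
    continuations (insert x I) = (continuations I).erase x ∪ descendants I x := by
  ext y
  have hold : y ∈ continuations I → (y ∈ continuations (insert x I) ↔ y ≠ x) := by
    simp +contextual [mem_continuations]
  by_cases hy : y ∈ continuations I <;> simp [descendants, hy, hold]

lemma mem_continuations_insert_of_ne (hy : y ∈ continuations I) (hxy : x ≠ y) :
    y ∈ continuations (insert x I) := by
  simp [continuations_insert, hy, hxy.symm]

lemma mem_continuations_of_mem_insert_of_mem_insert (hxy : x ≠ y)
    (hzx : z ∈ continuations (insert x I)) (hzy : z ∈ continuations (insert y I)) :
    z ∈ continuations I := by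
  rw [mem_continuations] at *
  refine ⟨fun hz => hzx.1 (Finset.mem_insert_of_mem hz), fun w hw => ?_⟩
  have hwx := hzx.2 w hw
  have hwy := hzy.2 w hw
  simp only [Finset.mem_insert] at hwx hwy
  grind

lemma sum_continuations_insert (I : Finset X) (x : X) (f : X → ℝ) :
    ∑ y ∈ continuations (insert x I), f y =
      ∑ y ∈ (continuations I).erase x, f y + ∑ y ∈ descendants I x, f y := by
  rw [continuations_insert, Finset.sum_union]
  exact Finset.disjoint_sdiff.mono_left (Finset.erase_subset _ _)

lemma isLowerSet_insert (hI : IsLowerSet (I : Set X)) (hx : x ∈ continuations I) :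
    IsLowerSet (↑(insert x I) : Set X) := by
  intro a b hba ha
  simp only [Finset.coe_insert, Set.mem_insert_iff, Finset.mem_coe] at ha ⊢
  rcases ha with rfl | ha
  · exact hba.eq_or_lt.imp_right ((mem_continuations.1 hx).2 b)
  · exact Or.inr (hI hba ha)

lemma continuations_nonempty (hI : I.card < Fintype.card X) : (continuations I).Nonempty := by
  obtain ⟨a, ha⟩ : ∃ a, a ∉ I := by
    by_contra! h
    exact hI.ne (by rw [Finset.eq_univ_iff_forall.2 h, Finset.card_univ])
  obtain ⟨b, hb⟩ := Iᶜ.exists_minimal ⟨a, Finset.mem_compl.2 ha⟩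
  refine ⟨b, mem_continuations.2 ⟨Finset.mem_compl.1 hb.1, fun c hc => ?_⟩⟩
  by_contra hcI
  exact hb.not_lt (Finset.mem_compl.2 hcI) hc

lemma descendants_subset_covers (hI : IsLowerSet (I : Set X)) (hx : x ∈ continuations I) :
    descendants I x ⊆ covers x := by
  intro y hy
  obtain ⟨hyx, hyI⟩ := Finset.mem_sdiff.1 hy
  rw [mem_continuations] at hyx hyI
  have hyI' : y ∉ I := fun h => hyx.1 (Finset.mem_insert_of_mem h)
  have hbelow : ∀ z < y, z = x ∨ z ∈ I := fun z hz => Finset.mem_insert.1 (hyx.2 z hz)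
  have hxy : x < y := by
    by_contra hxy
    exact hyI ⟨hyI', fun z hz => (hbelow z hz).resolve_left fun h => hxy (h ▸ hz)⟩
  have hcov : x ⋖ y := ⟨hxy, fun z hxz hzy =>
    (mem_continuations.1 hx).1 (hI hxz.le ((hbelow z hzy).resolve_left hxz.ne'))⟩
  simpa [covers] using hcov

end Continuations

section ExtensionForm

/-- The total weight of the words of length `m` extending a feasible word with letter set `I`. -/
def extWeight (ω : X → ℝ) : ℕ → Finset X → ℝ
  | 0, _ => 1
  | m + 1, I => ∑ x ∈ continuations I, ω x * extWeight ω m (insert x I)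

/-- The continuation of `I` from which the continuation `y` of `insert x I` originates: `y` itself
if it was available before `x` was added, and `x` otherwise. -/
def ancestor (I : Finset X) (x y : X) : X :=
  if y ∈ continuations I then y else x

/-- Pull-back of a function on the continuations of `I` to those of `insert x I` along `ancestor`.
In a pair `(f, t) : (X → ℝ) × ℝ`, only the values of `f` on continuations matter, and `t` is the
coefficient of one additional, homogenizing direction. -/
def transfer (I : Finset X) (x : X) : (X → ℝ) × ℝ →ₗ[ℝ] (X → ℝ) × ℝ :=
  (LinearMap.funLeft ℝ ℝ (ancestor I x)).prodMap LinearMap.id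

/-- The functional sending `(f, t)` to the sum of `f x * weight` over the extensions of `I` of
length `m + 1`, where `x` is the first letter, plus `t` times the weight of those of length `m`. -/
def extFunctional (ω : X → ℝ) (m : ℕ) (I : Finset X) : (X → ℝ) × ℝ →ₗ[ℝ] ℝ :=
  ∑ x ∈ continuations I,
      (ω x * extWeight ω m (insert x I)) • LinearMap.proj x ∘ₗ LinearMap.fst ℝ (X → ℝ) ℝ +
    extWeight ω m I • LinearMap.snd ℝ (X → ℝ) ℝ

/-- The bilinear form summing `f x * g (ancestor I x y) * weight` over the extensions of `I` of
length `m + 2` with first letters `x`, `y`, and homogenized by shorter extensions. It takes the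
values `extWeight ω (m + 2) I`, `extWeight ω (m + 1) I` and `extWeight ω m I` on pairs of vectors
among `(1, 0)` and `(0, 1)`, so that log-concavity is a reverse Cauchy–Schwarz inequality for it. -/
def extForm (ω : X → ℝ) (m : ℕ) (I : Finset X) : LinearMap.BilinForm ℝ ((X → ℝ) × ℝ) :=
  ∑ x ∈ continuations I,
      (LinearMap.proj x ∘ₗ LinearMap.fst ℝ (X → ℝ) ℝ).smulRight
        (ω x • extFunctional ω m (insert x I) ∘ₗ transfer I x) +
    (LinearMap.snd ℝ (X → ℝ) ℝ).smulRight (extFunctional ω m I)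

variable {ω : X → ℝ} {I : Finset X} {x y z : X}

lemma extWeight_zero (ω : X → ℝ) (I : Finset X) : extWeight ω 0 I = 1 := rfl

lemma transfer_apply (I : Finset X) (x : X) (u : (X → ℝ) × ℝ) :
    transfer I x u = (fun y => u.1 (ancestor I x y), u.2) := rfl

lemma transfer_fst_of_mem (hy : y ∈ continuations I) (x : X) (u : (X → ℝ) × ℝ) :
    (transfer I x u).1 y = u.1 y := by
  simp [transfer_apply, ancestor, hy]

lemma transfer_fst_of_notMem (hy : y ∉ continuations I) (x : X) (u : (X → ℝ) × ℝ) :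
    (transfer I x u).1 y = u.1 x := by
  simp [transfer_apply, ancestor, hy]

lemma transfer_const (I : Finset X) (x : X) (a t : ℝ) :
    transfer I x (fun _ => a, t) = (fun _ => a, t) := rfl

lemma extFunctional_apply (ω : X → ℝ) (m : ℕ) (I : Finset X) (u : (X → ℝ) × ℝ) :
    extFunctional ω m I u =
      ∑ x ∈ continuations I, ω x * extWeight ω m (insert x I) * u.1 x + extWeight ω m I * u.2 := by
  simp [extFunctional]

lemma extForm_apply (ω : X → ℝ) (m : ℕ) (I : Finset X) (u w : (X → ℝ) × ℝ) :
    extForm ω m I u w =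
      ∑ x ∈ continuations I, ω x * u.1 x * extFunctional ω m (insert x I) (transfer I x w) +
        u.2 * extFunctional ω m I w := by
  simp [extForm, LinearMap.sum_apply, mul_assoc, mul_left_comm]

lemma extFunctional_one_zero (ω : X → ℝ) (m : ℕ) (I : Finset X) :
    extFunctional ω m I (1, 0) = extWeight ω (m + 1) I := by
  simp [extFunctional_apply, extWeight]

lemma extFunctional_insert_transfer (ω : X → ℝ) (m : ℕ) (I : Finset X) (x : X)
    (u : (X → ℝ) × ℝ) :
    extFunctional ω m (insert x I) (transfer I x u) =
      ∑ y ∈ (continuations I).erase x, ω y * extWeight ω m (insert y (insert x I)) * u.1 y +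
        (∑ y ∈ descendants I x, ω y * extWeight ω m (insert y (insert x I))) * u.1 x +
        extWeight ω m (insert x I) * u.2 := by
  rw [extFunctional_apply, sum_continuations_insert, Finset.sum_mul]
  congr 2
  · exact Finset.sum_congr rfl fun y hy => by
      rw [transfer_fst_of_mem (Finset.mem_of_mem_erase hy)]
  · exact Finset.sum_congr rfl fun y hy => by
      rw [transfer_fst_of_notMem (Finset.mem_sdiff.1 hy).2]

lemma extForm_eq_sum (ω : X → ℝ) (m : ℕ) (I : Finset X) (u w : (X → ℝ) × ℝ) :
    extForm ω m I u w =
      ∑ x ∈ continuations I, ∑ y ∈ (continuations I).erase x,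
          ω x * ω y * extWeight ω m (insert y (insert x I)) * (u.1 x * w.1 y) +
        ∑ x ∈ continuations I,
          ω x * (∑ y ∈ descendants I x, ω y * extWeight ω m (insert y (insert x I))) *
            (u.1 x * w.1 x) +
        ∑ x ∈ continuations I, ω x * extWeight ω m (insert x I) * (u.1 x * w.2 + w.1 x * u.2) +
        extWeight ω m I * (u.2 * w.2) := by
  simp only [extForm_apply, extFunctional_insert_transfer]
  rw [extFunctional_apply, mul_add, Finset.mul_sum, ← add_assoc]
  simp only [← Finset.sum_add_distrib]
  congr 1
  · refine Finset.sum_congr rfl fun x _ => ?_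
    have hsum : ∑ y ∈ (continuations I).erase x,
          ω x * ω y * extWeight ω m (insert y (insert x I)) * (u.1 x * w.1 y) =
        ω x * u.1 x *
          ∑ y ∈ (continuations I).erase x, ω y * extWeight ω m (insert y (insert x I)) * w.1 y := by
      rw [Finset.mul_sum]
      exact Finset.sum_congr rfl fun y _ => by ring
    rw [hsum]
    ring
  · ring

lemma extForm_isSymm (ω : X → ℝ) (m : ℕ) (I : Finset X) : (extForm ω m I).IsSymm := by
  refine ⟨fun u w => ?_⟩
  have hoff : ∑ x ∈ continuations I, ∑ y ∈ (continuations I).erase x,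
        ω x * ω y * extWeight ω m (insert y (insert x I)) * (u.1 x * w.1 y) =
      ∑ x ∈ continuations I, ∑ y ∈ (continuations I).erase x,
        ω x * ω y * extWeight ω m (insert y (insert x I)) * (w.1 x * u.1 y) := by
    rw [sum_sum_erase_comm]
    refine Finset.sum_congr rfl fun x _ => Finset.sum_congr rfl fun y _ => ?_
    rw [Finset.insert_comm]
    ring
  rw [extForm_eq_sum, extForm_eq_sum, hoff]
  refine congrArg₂ _ (congrArg₂ _ (congrArg₂ _ rfl ?_) ?_) (by ring) <;>
    exact Finset.sum_congr rfl fun x _ => by ring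

lemma extForm_one_zero (ω : X → ℝ) (m : ℕ) (I : Finset X) :
    extForm ω m I (1, 0) = extFunctional ω (m + 1) I := by
  refine LinearMap.ext fun w => ?_
  have htransfer (x : X) : transfer I x (1, 0) = (1, 0) := transfer_const I x 1 0
  rw [(extForm_isSymm ω m I).eq, extForm_apply, extFunctional_apply ω (m + 1)]
  simp only [htransfer, extFunctional_one_zero, mul_right_comm, mul_comm w.2]

lemma extForm_single_apply (hx : x ∈ continuations I) (ω : X → ℝ) (m : ℕ) (w : (X → ℝ) × ℝ) :
    extForm ω m I (Pi.single x 1, 0) w =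
      ω x * extFunctional ω m (insert x I) (transfer I x w) := by
  simp [extForm_apply, Pi.single_apply, hx]

lemma extForm_single_single (hx : x ∈ continuations I) (hy : y ∈ continuations I) (hxy : x ≠ y)
    (ω : X → ℝ) (m : ℕ) :
    extForm ω m I (Pi.single x 1, 0) (Pi.single y 1, 0) =
      ω x * (ω y * extWeight ω m (insert y (insert x I))) := by
  rw [extForm_single_apply hx, extFunctional_insert_transfer]
  simp [Pi.single_apply, hy, hxy, hxy.symm]

lemma extFunctional_succ (ω : X → ℝ) (m : ℕ) (I : Finset X) (u : (X → ℝ) × ℝ) :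
    extFunctional ω (m + 1) I u =
      ∑ x ∈ continuations I, ω x * extFunctional ω m (insert x I) (transfer I x u) := by
  simp [← extForm_one_zero, extForm_apply]

lemma extForm_one_zero_zero_one (ω : X → ℝ) (m : ℕ) (I : Finset X) :
    extForm ω m I (1, 0) (0, 1) = extWeight ω (m + 1) I := by
  simp [extForm_one_zero, extFunctional_apply]

lemma extForm_one_zero_self (ω : X → ℝ) (m : ℕ) (I : Finset X) :
    extForm ω m I (1, 0) (1, 0) = extWeight ω (m + 2) I := by
  rw [extForm_one_zero, extFunctional_one_zero]

lemma extForm_zero_one_self (ω : X → ℝ) (m : ℕ) (I : Finset X) :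
    extForm ω m I (0, 1) (0, 1) = extWeight ω m I := by
  simp [extForm_apply, extFunctional_apply]

lemma transfer_transfer_fst (hy : y ∈ continuations I) (z : X) (u : (X → ℝ) × ℝ) :
    (transfer (insert x I) y (transfer I x u)).1 z =
      if z ∈ continuations (insert x I) then (transfer I x u).1 z else u.1 y := by
  split_ifs with hz
  · rw [transfer_fst_of_mem hz]
  · rw [transfer_fst_of_notMem hz, transfer_fst_of_mem hy]

-- The two iterated transfers differ at `z` either by `u.1 y - u.1 x` or not at all.
lemma sub_mul_transfer_transfer_sub_nonneg (hx : x ∈ continuations I) (hy : y ∈ continuations I)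
    (hxy : x ≠ y) (z : X) (u : (X → ℝ) × ℝ) :
    0 ≤ (u.1 y - u.1 x) * ((transfer (insert x I) y (transfer I x u)).1 z -
      (transfer (insert y I) x (transfer I y u)).1 z) := by
  have hboth := mem_continuations_of_mem_insert_of_mem_insert (I := I) (z := z) hxy
  have hzx : z ∈ continuations I → z ∉ continuations (insert x I) → z = x := fun hz h =>
    by_contra fun hne => h (mem_continuations_insert_of_ne hz (Ne.symm hne))
  have hzy : z ∈ continuations I → z ∉ continuations (insert y I) → z = y := fun hz h =>
    by_contra fun hne => h (mem_continuations_insert_of_ne hz (Ne.symm hne))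
  rw [transfer_transfer_fst hy, transfer_transfer_fst hx]
  by_cases hz : z ∈ continuations I
  · rw [transfer_fst_of_mem hz, transfer_fst_of_mem hz]
    split_ifs with h₁ h₂ h₂
    · simp
    · rw [hzy hz h₂]
      exact mul_self_nonneg _
    · rw [hzx hz h₁]
      exact mul_self_nonneg _
    · exact mul_self_nonneg _
  · rw [transfer_fst_of_notMem hz, transfer_fst_of_notMem hz]
    split_ifs with h₁ h₂ h₂
    · exact absurd (hboth h₁ h₂) hz
    · simp
    · simp
    · exact mul_self_nonneg _

lemma sum_extForm_transfer_sub_extForm (ω : X → ℝ) (m : ℕ) (I : Finset X) (u : (X → ℝ) × ℝ) :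
    ∑ x ∈ continuations I, ω x * extForm ω m (insert x I) (transfer I x u) (transfer I x u) -
        extForm ω (m + 1) I u u =
      ∑ x ∈ continuations I, ∑ y ∈ (continuations I).erase x, ω x * ω y * ((u.1 y - u.1 x) *
        extFunctional ω m (insert y (insert x I)) (transfer (insert x I) y (transfer I x u))) := by
  rw [extForm_apply, extFunctional_succ, Finset.mul_sum, ← Finset.sum_add_distrib,
    ← Finset.sum_sub_distrib]
  refine Finset.sum_congr rfl fun x _ => ?_
  have hnew : ∀ y ∈ descendants I x, (transfer I x u).1 y = u.1 x := fun y hy =>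
    transfer_fst_of_notMem (Finset.mem_sdiff.1 hy).2 x u
  have hold : ∀ y ∈ (continuations I).erase x, (transfer I x u).1 y = u.1 y := fun y hy =>
    transfer_fst_of_mem (Finset.mem_of_mem_erase hy) x u
  have hE : ω x * extForm ω m (insert x I) (transfer I x u) (transfer I x u) -
        (ω x * u.1 x * extFunctional ω (m + 1) (insert x I) (transfer I x u) +
          u.2 * (ω x * extFunctional ω m (insert x I) (transfer I x u))) =
      ∑ y ∈ continuations (insert x I), ω x * ω y * (((transfer I x u).1 y - u.1 x) *
        extFunctional ω m (insert y (insert x I)) (transfer (insert x I) y (transfer I x u))) := by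
    rw [extForm_apply, extFunctional_succ, transfer_apply I]
    simp only [mul_sub, sub_mul, Finset.sum_sub_distrib, mul_add, Finset.mul_sum]
    ring_nf
  rw [hE, sum_continuations_insert, Finset.sum_eq_zero (s := descendants I x), add_zero]
  · exact Finset.sum_congr rfl fun y hy => by rw [hold y hy]
  · exact fun y hy => by rw [hnew y hy, sub_self, zero_mul, mul_zero]

variable (hω : ∀ x, 0 ≤ ω x)
include hω

lemma extWeight_nonneg (m : ℕ) (I : Finset X) : 0 ≤ extWeight ω m I := by
  induction m generalizing I with
  | zero => exact zero_le_one
  | succ m ih => exact Finset.sum_nonneg fun x _ => mul_nonneg (hω x) (ih _)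

lemma sub_mul_extFunctional_transfer_sub_nonneg (hx : x ∈ continuations I)
    (hy : y ∈ continuations I) (hxy : x ≠ y) (m : ℕ) (J : Finset X) (u : (X → ℝ) × ℝ) :
    0 ≤ (u.1 y - u.1 x) * (extFunctional ω m J (transfer (insert x I) y (transfer I x u)) -
      extFunctional ω m J (transfer (insert y I) x (transfer I y u))) := by
  rw [extFunctional_apply, extFunctional_apply, add_sub_add_comm, ← Finset.sum_sub_distrib,
    mul_add, Finset.mul_sum]
  refine add_nonneg (Finset.sum_nonneg fun z _ => ?_) (by simp [transfer_apply])
  rw [← mul_sub, mul_left_comm]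
  exact mul_nonneg (mul_nonneg (hω z) (extWeight_nonneg hω m _))
    (sub_mul_transfer_transfer_sub_nonneg hx hy hxy z u)

-- Exchanging the first two letters pairs up the terms of `sum_extForm_transfer_sub_extForm`.
theorem extForm_succ_le_sum (m : ℕ) (I : Finset X) (u : (X → ℝ) × ℝ) :
    extForm ω (m + 1) I u u ≤
      ∑ x ∈ continuations I,
        ω x * extForm ω m (insert x I) (transfer I x u) (transfer I x u) := by
  rw [← sub_nonneg, sum_extForm_transfer_sub_extForm]
  refine sum_sum_erase_nonneg fun x hx y hy hxy => ?_
  have hswap := mul_nonneg (mul_nonneg (hω x) (hω y))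
    (sub_mul_extFunctional_transfer_sub_nonneg hω hx hy hxy m (insert y (insert x I)) u)
  rw [Finset.insert_comm x y I]
  linarith

end ExtensionForm

section Deficit

/-- The amount by which the weight of `x` exceeds the total weight of its descendants. -/
def deficit (ω : X → ℝ) (I : Finset X) (x : X) : ℝ :=
  ω x - ∑ y ∈ descendants I x, ω y

variable {ω : X → ℝ} {I : Finset X} {x : X}

lemma extFunctional_zero_insert_transfer (hx : x ∈ continuations I) (ω : X → ℝ)
    (u : (X → ℝ) × ℝ) :
    extFunctional ω 0 (insert x I) (transfer I x u) =
      extFunctional ω 0 I u - deficit ω I x * u.1 x := by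
  rw [extFunctional_insert_transfer, extFunctional_apply, ← Finset.add_sum_erase _ _ hx]
  simp only [extWeight_zero, deficit, mul_one]
  ring

lemma extForm_zero_apply (ω : X → ℝ) (I : Finset X) (u w : (X → ℝ) × ℝ) :
    extForm ω 0 I u w = extFunctional ω 0 I u * extFunctional ω 0 I w -
      ∑ x ∈ continuations I, ω x * deficit ω I x * (u.1 x * w.1 x) := by
  have hterm : ∀ x ∈ continuations I,
      ω x * u.1 x * extFunctional ω 0 (insert x I) (transfer I x w) =
        ω x * u.1 x * extFunctional ω 0 I w - ω x * deficit ω I x * (u.1 x * w.1 x) :=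
    fun x hx => by rw [extFunctional_zero_insert_transfer hx]; ring
  rw [extForm_apply, Finset.sum_congr rfl hterm, Finset.sum_sub_distrib, ← Finset.sum_mul,
    extFunctional_apply ω 0 I u]
  simp only [extWeight_zero, mul_one]
  ring

lemma sum_mul_deficit (ω : X → ℝ) (I : Finset X) :
    ∑ x ∈ continuations I, ω x * deficit ω I x = extWeight ω 1 I ^ 2 - extWeight ω 2 I := by
  have h := extForm_zero_apply ω I (1, 0) (1, 0)
  simp only [extForm_one_zero_self, extFunctional_one_zero, Pi.one_apply, mul_one] at h
  linarith

variable (hCM : ∀ x, ∑ y ∈ covers x, ω y ≤ ω x) (hI : IsLowerSet (I : Set X))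
include hCM hI

lemma deficit_nonneg (hω : ∀ x, 0 ≤ ω x) (hx : x ∈ continuations I) : 0 ≤ deficit ω I x :=
  sub_nonneg.2 <| (Finset.sum_le_sum_of_subset_of_nonneg (descendants_subset_covers hI hx)
    fun y _ _ => hω y).trans (hCM x)

lemma deficit_eq_zero_iff (hω : ∀ x, 0 < ω x) (hx : x ∈ continuations I) :
    deficit ω I x = 0 ↔ descendants I x = covers x ∧ ∑ y ∈ covers x, ω y = ω x := by
  refine ⟨fun h => ?_, fun ⟨hdesc, hsum⟩ => by rw [deficit, hdesc, hsum, sub_self]⟩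
  have hsum : ω x = ∑ y ∈ descendants I x, ω y := sub_eq_zero.1 h
  have hdesc : descendants I x = covers x := by
    by_contra hne
    obtain ⟨y, hy, hy'⟩ :=
      Finset.exists_of_ssubset ((descendants_subset_covers hI hx).ssubset_of_ne hne)
    have hlt := Finset.sum_lt_sum_of_subset (descendants_subset_covers hI hx) hy hy' (hω y)
      fun z _ _ => (hω z).le
    linarith [hCM x]
  exact ⟨hdesc, by rw [← hdesc, ← hsum]⟩

lemma extWeight_one_two_eq_iff (hω : ∀ x, 0 < ω x) (hne : (continuations I).Nonempty) {s : ℝ} :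
    extWeight ω 1 I = s ∧ extWeight ω 2 I = s ^ 2 ↔
      ∀ x ∈ continuations I, ∑ x' ∈ continuations I, ω x' = s ∧ descendants I x = covers x ∧
        ∑ y ∈ covers x, ω y = ω x := by
  have hone : extWeight ω 1 I = ∑ x ∈ continuations I, ω x := by simp [extWeight]
  have hzero : extWeight ω 2 I = extWeight ω 1 I ^ 2 ↔
      ∀ x ∈ continuations I, deficit ω I x = 0 := by
    rw [eq_comm, ← sub_eq_zero, ← sum_mul_deficit, Finset.sum_eq_zero_iff_of_nonneg fun x hx =>
      mul_nonneg (hω x).le (deficit_nonneg hCM hI (fun y => (hω y).le) hx)]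
    simp [(hω _).ne']
  constructor
  · rintro ⟨h₁, h₂⟩ x hx
    exact ⟨hone.symm.trans h₁,
      (deficit_eq_zero_iff hCM hI hω hx).1 (hzero.1 (by rw [h₂, h₁]) x hx)⟩
  · intro h
    obtain ⟨x₀, hx₀⟩ := hne
    have h₁ : extWeight ω 1 I = s := hone.trans (h x₀ hx₀).1
    exact ⟨h₁, (hzero.2 fun x hx => (deficit_eq_zero_iff hCM hI hω hx).2 (h x hx).2).trans
      (by rw [h₁])⟩

-- For `u` orthogonal to `(1, 0)`, the form is controlled by the Cauchy–Schwarz inequality with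
-- weights `ω x * deficit ω I x`.
lemma isHyperbolicAlong_extForm_zero (hω : ∀ x, 0 ≤ ω x) (hpos : 0 < extWeight ω 1 I) :
    IsHyperbolicAlong (extForm ω 0 I) (1, 0) := by
  intro u hu
  have hδ : ∀ x ∈ continuations I, 0 ≤ ω x * deficit ω I x := fun x hx =>
    mul_nonneg (hω x) (deficit_nonneg hCM hI hω hx)
  set Q := ∑ x ∈ continuations I, ω x * deficit ω I x * (u.1 x * u.1 x) with hQ
  have hQ0 : 0 ≤ Q := Finset.sum_nonneg fun x hx => mul_nonneg (hδ x hx) (mul_self_nonneg _)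
  have hlin : extWeight ω 1 I * extFunctional ω 0 I u =
      ∑ x ∈ continuations I, ω x * deficit ω I x * u.1 x := by
    simp only [extForm_zero_apply, extFunctional_one_zero, Pi.one_apply, one_mul] at hu
    linarith
  have hCS : (extWeight ω 1 I * extFunctional ω 0 I u) ^ 2 ≤
      (∑ x ∈ continuations I, ω x * deficit ω I x) * Q := by
    rw [hlin]
    exact Finset.sum_sq_le_sum_mul_sum_of_sq_le_mul _ hδ
      (fun x hx => mul_nonneg (hδ x hx) (mul_self_nonneg _)) fun x _ => le_of_eq (by ring)
  have hle : extWeight ω 1 I ^ 2 * extFunctional ω 0 I u ^ 2 ≤ extWeight ω 1 I ^ 2 * Q := by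
    rw [sum_mul_deficit] at hCS
    nlinarith [mul_nonneg (extWeight_nonneg hω 2 I) hQ0]
  rw [extForm_zero_apply, ← hQ, ← sq]
  linarith [le_of_mul_le_mul_left hle (pow_pos hpos 2)]

end Deficit

section Propagation

variable {ω : X → ℝ} (hω : ∀ x, 0 < ω x) {m : ℕ} {I : Finset X} {x : X} {u : (X → ℝ) × ℝ}

lemma extForm_one_zero_eq_sum_single (ω : X → ℝ) (m : ℕ) (I : Finset X) :
    extForm ω m I (1, 0) = ∑ x : continuations I, extForm ω m I (Pi.single (x : X) 1, 0) := by
  refine LinearMap.ext fun w => ?_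
  rw [extForm_one_zero, extFunctional_succ, LinearMap.sum_apply, ← Finset.sum_coe_sort]
  exact Finset.sum_congr rfl fun x _ => (extForm_single_apply x.2 ω m w).symm

include hω

lemma extWeight_pos (h : I.card + m ≤ Fintype.card X) : 0 < extWeight ω m I := by
  induction m generalizing I with
  | zero => exact zero_lt_one
  | succ m ih =>
    refine Finset.sum_pos (fun x hx => mul_pos (hω x) (ih ?_)) (continuations_nonempty (by omega))
    rw [Finset.card_insert_of_notMem (mem_continuations.1 hx).1]
    omega

lemma extForm_single_single_pos (h : I.card + (m + 2) ≤ Fintype.card X) {x y : continuations I}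
    (hxy : x ≠ y) :
    0 < extForm ω m I (Pi.single (x : X) 1, 0) (Pi.single (y : X) 1, 0) := by
  have hxy' : (x : X) ≠ y := Subtype.coe_ne_coe.2 hxy
  rw [extForm_single_single x.2 y.2 hxy']
  refine mul_pos (hω x) (mul_pos (hω y) (extWeight_pos hω ?_))
  grw [Finset.card_insert_le, Finset.card_insert_le]
  omega

lemma extForm_succ_le_sum_sq_div (h : I.card + (m + 3) ≤ Fintype.card X)
    (hhyp : ∀ x ∈ continuations I, IsHyperbolicAlong (extForm ω m (insert x I)) (1, 0))
    (u : (X → ℝ) × ℝ) :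
    extForm ω (m + 1) I u u ≤ ∑ x : continuations I,
      extForm ω (m + 1) I (Pi.single (x : X) 1, 0) u ^ 2 /
        extForm ω (m + 1) I (Pi.single (x : X) 1, 0) (1, 0) := by
  refine (extForm_succ_le_sum (fun x => (hω x).le) m I u).trans ?_
  rw [← Finset.sum_coe_sort]
  refine Finset.sum_le_sum fun x _ => ?_
  have hpos : 0 < extForm ω m (insert x.1 I) (1, 0) (1, 0) := by
    rw [extForm_one_zero_self]
    refine extWeight_pos hω ?_
    grw [Finset.card_insert_le]
    omega
  have hle := (hhyp x x.2).apply_self_le_sq_div (extForm_isSymm ω m _) hpos (transfer I x u)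
  have hfix : transfer I x.1 (1, 0) = (1, 0) := transfer_const I x 1 0
  rw [extForm_single_apply x.2, extForm_single_apply x.2, hfix, ← extForm_one_zero]
  calc _ ≤ _ := mul_le_mul_of_nonneg_left hle (hω x).le
    _ = _ := by
      have := (hω x).ne'
      field_simp

variable (hCM : ∀ x, ∑ y ∈ covers x, ω y ≤ ω x)
include hCM

theorem isHyperbolicAlong_extForm (m : ℕ) {I : Finset X} (hI : IsLowerSet (I : Set X))
    (h : I.card + (m + 2) ≤ Fintype.card X) : IsHyperbolicAlong (extForm ω m I) (1, 0) := by
  induction m generalizing I with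
  | zero =>
    exact isHyperbolicAlong_extForm_zero hCM hI (fun x => (hω x).le) (extWeight_pos hω (by omega))
  | succ m ih =>
    refine isHyperbolicAlong_of_apply_self_le_sum (extForm_isSymm ω _ I)
      (extForm_one_zero_eq_sum_single ω _ I) (fun x y => extForm_single_single_pos hω h)
      (extForm_succ_le_sum_sq_div hω h fun x hx => ih (isLowerSet_insert hI hx) ?_)
    grw [Finset.card_insert_le]
    omega

theorem IsNullAlong.extForm_insert (hI : IsLowerSet (I : Set X))
    (h : I.card + (m + 3) ≤ Fintype.card X) (hu : IsNullAlong (extForm ω (m + 1) I) (1, 0) u)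
    (hx : x ∈ continuations I) :
    IsNullAlong (extForm ω m (insert x I)) (1, 0) (transfer I x u) := by
  have hhyp : ∀ y ∈ continuations I, IsHyperbolicAlong (extForm ω m (insert y I)) (1, 0) :=
    fun y hy => isHyperbolicAlong_extForm hω hCM m (isLowerSet_insert hI hy) (by
      grw [Finset.card_insert_le]
      omega)
  have horth : ∀ y ∈ continuations I, extForm ω m (insert y I) (1, 0) (transfer I y u) = 0 := by
    intro y hy
    have hy0 := hu.apply_eq_zero (extForm_isSymm ω _ I)
      (extForm_one_zero_eq_sum_single ω _ I) (fun x y => extForm_single_single_pos hω h)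
      (extForm_succ_le_sum_sq_div hω h hhyp) ⟨y, hy⟩
    rw [extForm_single_apply hy, ← extForm_one_zero] at hy0
    exact (mul_eq_zero.1 hy0).resolve_left (hω y).ne'
  have hnonpos : ∀ y ∈ continuations I,
      ω y * extForm ω m (insert y I) (transfer I y u) (transfer I y u) ≤ 0 := fun y hy =>
    mul_nonpos_of_nonneg_of_nonpos (hω y).le (hhyp y hy _ (horth y hy))
  have hsum := extForm_succ_le_sum (fun x => (hω x).le) m I u
  rw [hu.2] at hsum
  have hx0 := (Finset.sum_eq_zero_iff_of_nonpos hnonpos).1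
    (le_antisymm (Finset.sum_nonpos hnonpos) hsum) x hx
  exact ⟨horth x hx, (mul_eq_zero.1 hx0).resolve_left (hω x).ne'⟩

omit hω hCM in
lemma isNullAlong_extForm_const_iff {s : ℝ} (hs : s ≠ 0) :
    IsNullAlong (extForm ω m I) (1, 0) (fun _ => -1, s) ↔
      extWeight ω (m + 1) I = s * extWeight ω m I ∧
        extWeight ω (m + 2) I = s * extWeight ω (m + 1) I := by
  have hdecomp : ((fun _ => -1, s) : (X → ℝ) × ℝ) = s • (0, 1) - (1, 0) := by
    ext <;> simp
  have hsymm := (extForm_isSymm ω m I).eq (0, 1) (1, 0)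
  simp only [IsNullAlong, hdecomp, map_sub, map_smul, LinearMap.sub_apply, LinearMap.smul_apply,
    smul_eq_mul, hsymm, extForm_one_zero_zero_one, extForm_one_zero_self, extForm_zero_one_self]
  constructor
  · rintro ⟨h₁, h₂⟩
    exact ⟨mul_left_cancel₀ hs (by linarith), by linarith⟩
  · rintro ⟨h₁, h₂⟩
    exact ⟨by linarith, by rw [h₂, h₁]; ring⟩

end Propagation

section Words

variable {α : List X} {x : X} {k : ℕ}

/-- The feasible words of length `k`, i.e. the set `L_k`. -/
def feasibleWords (X : Type*) [Fintype X] [DecidableEq X] [PartialOrder X] (k : ℕ) :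
    Finset (List X) :=
  (wordsLen X k).filter fun α => FeasibleWord α

omit [Fintype X] [DecidableEq X] in
lemma feasibleWord_nil : FeasibleWord ([] : List X) :=
  ⟨List.nodup_nil, by simp⟩

omit [Fintype X] [PartialOrder X] in
lemma toFinset_append_singleton (α : List X) (x : X) :
    (α ++ [x]).toFinset = insert x α.toFinset := by
  ext y
  simp

lemma feasibleWord_append_singleton :
    FeasibleWord (α ++ [x]) ↔ FeasibleWord α ∧ x ∈ continuations α.toFinset := by
  simp only [mem_continuations, List.mem_toFinset]
  constructor
  · rintro ⟨hnodup, hbelow⟩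
    rw [← List.concat_eq_append, List.nodup_concat] at hnodup
    exact ⟨⟨hnodup.2, fun l₁ l₂ z hz => hbelow l₁ (l₂ ++ [x]) z (by simp [hz])⟩, hnodup.1,
      hbelow α [] x rfl⟩
  · rintro ⟨⟨hnodup, hbelow⟩, hx, hxbelow⟩
    rw [FeasibleWord, ← List.concat_eq_append, List.nodup_concat]
    refine ⟨⟨hx, hnodup⟩, fun l₁ l₂ z hz => ?_⟩
    rw [List.concat_eq_append] at hz
    rcases l₂.eq_nil_or_concat' with rfl | ⟨l, w, rfl⟩
    · obtain ⟨rfl, hxz⟩ := List.append_inj' hz rfl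
      rwa [← List.singleton_inj.1 hxz]
    · have hz' : α ++ [x] = l₁ ++ z :: l ++ [w] := by simpa using hz
      exact hbelow l₁ l z (List.append_inj' hz' rfl).1

omit [Fintype X] in
lemma FeasibleWord.isLowerSet (h : FeasibleWord α) : IsLowerSet (α.toFinset : Set X) := by
  intro x y hyx hx
  rcases hyx.eq_or_lt with rfl | hyx
  · exact hx
  · obtain ⟨l₁, l₂, rfl⟩ := List.append_of_mem (List.mem_toFinset.1 hx)
    simp [h.2 l₁ l₂ x rfl y hyx]

lemma FeasibleWord.cntA_eq (h : FeasibleWord α) : CntA α = continuations α.toFinset := by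
  ext x
  simp [CntA, feasibleWord_append_singleton, h]

lemma FeasibleWord.desA_eq (h : FeasibleWord α) (hx : x ∈ continuations α.toFinset) :
    DesA α x = descendants α.toFinset x := by
  ext y
  have hsplit : α ++ [x, y] = α ++ [x] ++ [y] := by simp
  simp only [DesA, hsplit, feasibleWord_append_singleton, toFinset_append_singleton, h, hx,
    descendants, true_and, Finset.mem_filter, Finset.mem_univ, Finset.mem_sdiff]

lemma mem_feasibleWords : α ∈ feasibleWords X k ↔ α.length = k ∧ FeasibleWord α := by
  rw [feasibleWords, Finset.mem_filter, wordsLen, Finset.mem_image]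
  refine and_congr_left fun _ => ⟨?_, ?_⟩
  · rintro ⟨f, _, rfl⟩
    exact List.length_ofFn
  · rintro rfl
    exact ⟨α.get, Finset.mem_univ _, List.ofFn_get α⟩

lemma feasibleWords_zero : feasibleWords X 0 = {[]} := by
  ext α
  simp +contextual [mem_feasibleWords, feasibleWord_nil]

lemma sum_feasibleWords_succ (k : ℕ) (F : List X → ℝ) :
    ∑ α ∈ feasibleWords X (k + 1), F α =
      ∑ α ∈ feasibleWords X k, ∑ x ∈ continuations α.toFinset, F (α ++ [x]) := by
  rw [Finset.sum_sigma']
  symm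
  refine Finset.sum_bij (fun p _ => p.1 ++ [p.2]) ?_ ?_ ?_ fun _ _ => rfl
  · rintro ⟨α, x⟩ h
    simpa [mem_feasibleWords, feasibleWord_append_singleton, and_assoc] using h
  · rintro ⟨α, x⟩ _ ⟨β, y⟩ _ h
    obtain ⟨hαβ, hxy⟩ := List.append_inj' h rfl
    exact Sigma.ext hαβ (heq_of_eq (List.singleton_inj.1 hxy))
  · intro β hβ
    rw [mem_feasibleWords] at hβ
    rcases β.eq_nil_or_concat' with rfl | ⟨α, x, rfl⟩
    · simp at hβ
    · exact ⟨⟨α, x⟩, by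
        simpa [mem_feasibleWords, feasibleWord_append_singleton, and_assoc] using hβ, rfl⟩

lemma lw_add (ω : X → ℝ) (j m : ℕ) :
    Lw ω (j + m) = ∑ α ∈ feasibleWords X j, (α.map ω).prod * extWeight ω m α.toFinset := by
  induction m generalizing j with
  | zero => simp [Lw, feasibleWords, extWeight]
  | succ m ih =>
    rw [← add_assoc, add_right_comm, ih, sum_feasibleWords_succ]
    refine Finset.sum_congr rfl fun α _ => ?_
    rw [extWeight, Finset.mul_sum]
    refine Finset.sum_congr rfl fun x _ => ?_
    rw [toFinset_append_singleton, List.map_append, List.prod_append, List.map_singleton,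
      List.prod_singleton, mul_assoc]

lemma lw_eq_extWeight_empty (ω : X → ℝ) (m : ℕ) : Lw ω m = extWeight ω m ∅ := by
  simpa [feasibleWords_zero] using lw_add ω 0 m

lemma lw_add_eq_mul {ω : X → ℝ} {j m : ℕ} {c : ℝ}
    (h : ∀ α : List X, FeasibleWord α → α.length = j → extWeight ω m α.toFinset = c) :
    Lw ω (j + m) = c * Lw ω j := by
  rw [lw_add, ← add_zero j, lw_add, Finset.mul_sum, add_zero]
  refine Finset.sum_congr rfl fun α hα => ?_
  obtain ⟨hlen, hfeas⟩ := mem_feasibleWords.1 hα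
  rw [h α hfeas hlen, extWeight_zero, mul_one, mul_comm]

variable {ω : X → ℝ} (hω : ∀ x, 0 < ω x) (hCM : ∀ x, ∑ y ∈ covers x, ω y ≤ ω x)
include hω hCM

lemma IsNullAlong.extForm_toFinset {m : ℕ} {a t : ℝ} (hα : FeasibleWord α)
    (hcard : α.length + (m + 2) ≤ Fintype.card X)
    (hnull : IsNullAlong (extForm ω (α.length + m) ∅) (1, 0) (fun _ => a, t)) :
    IsNullAlong (extForm ω m α.toFinset) (1, 0) (fun _ => a, t) := by
  induction α using List.reverseRecOn generalizing m with
  | nil => simpa using hnull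
  | append_singleton α x ih =>
    obtain ⟨hα, hx⟩ := feasibleWord_append_singleton.1 hα
    rw [List.length_append, List.length_singleton] at hcard hnull
    have hprev := ih (m := m + 1) hα (by omega) (by rwa [add_right_comm, add_assoc] at hnull)
    have hlen : α.toFinset.card = α.length := List.toFinset_card_of_nodup hα.1
    rw [toFinset_append_singleton]
    exact hprev.extForm_insert hω hCM hα.isLowerSet (by omega) hx

lemma FeasibleWord.extWeight_eq_iff (hα : FeasibleWord α)
    (hcard : α.length < Fintype.card X) {s : ℝ} :
    extWeight ω 1 α.toFinset = s ∧ extWeight ω 2 α.toFinset = s ^ 2 ↔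
      ∀ x ∈ CntA α, ∑ x' ∈ CntA α, ω x' = s ∧ DesA α x = covers x ∧
        ∑ y ∈ covers x, ω y = ω x := by
  have hlen : α.toFinset.card = α.length := List.toFinset_card_of_nodup hα.1
  rw [extWeight_one_two_eq_iff hCM hα.isLowerSet hω (continuations_nonempty (by omega)),
    hα.cntA_eq]
  exact forall₂_congr fun x hx => by rw [hα.desA_eq hx]

lemma forall_extWeight_one_two_eq_of_sq_eq {m : ℕ} (hcard : m + 2 ≤ Fintype.card X)
    (heq : Lw ω (m + 1) ^ 2 = Lw ω m * Lw ω (m + 2)) :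
    ∃ s, 0 < s ∧ ∀ α : List X, FeasibleWord α → α.length = m →
      extWeight ω 1 α.toFinset = s ∧ extWeight ω 2 α.toFinset = s ^ 2 := by
  have hpos {i : ℕ} (hi : i ≤ Fintype.card X) : 0 < Lw ω i := by
    rw [lw_eq_extWeight_empty]
    exact extWeight_pos hω (by simpa using hi)
  have h₀ : 0 < Lw ω m := hpos (by omega)
  have hs : 0 < Lw ω (m + 1) / Lw ω m := div_pos (hpos (by omega)) h₀
  refine ⟨_, hs, ?_⟩
  rintro α hα rfl
  have hempty := (isNullAlong_extForm_const_iff (ω := ω) (m := α.length) (I := ∅) hs.ne').2 (by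
    simp only [← lw_eq_extWeight_empty]
    constructor
    · field_simp
    · field_simp
      linarith)
  have hnull := hempty.extForm_toFinset hω hCM hα (m := 0) hcard
  obtain ⟨h₁, h₂⟩ := (isNullAlong_extForm_const_iff hs.ne').1 hnull
  simp only [extWeight_zero, mul_one, zero_add] at h₁ h₂
  exact ⟨h₁, by rw [h₂, h₁, sq]⟩

end Words

/-- **Equality conditions for poset antimatroids.**  Equality
`L_ω(k)² = L_ω(k-1)·L_ω(k+1)` holds if and only if there is `s > 0` such that for every
feasible word `α` of length `k-1` and every `x ∈ Cnt(α)`: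
(AE1) `Σ_{x' ∈ Cnt(α)} ω(x') = s`; (AE2) `Des_α(x) = Cov(x)`;
(AE3) `Σ_{y ∈ Cov(x)} ω(y) = ω(x)`. -/
theorem poset_antimatroid_equality
    (ω : X → ℝ) (hω : ∀ x, 0 < ω x)
    (hCM : ∀ x : X, (∑ y ∈ covers x, ω y) ≤ ω x)
    (k : ℕ) (hk1 : 1 ≤ k) (hk2 : k < Fintype.card X) :
    (Lw ω k) ^ 2 = Lw ω (k - 1) * Lw ω (k + 1) ↔
      ∃ s : ℝ, 0 < s ∧ ∀ α : List X, FeasibleWord α → α.length = k - 1 →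
        ∀ x ∈ CntA α,
          (∑ x' ∈ CntA α, ω x') = s ∧
          DesA α x = covers x ∧
          (∑ y ∈ covers x, ω y) = ω x := by
  obtain ⟨m, rfl⟩ : ∃ m, k = m + 1 := ⟨k - 1, by omega⟩
  rw [Nat.add_sub_cancel]
  have hlocal (s : ℝ) (α : List X) (hα : FeasibleWord α) (hlen : α.length = m) :=
    hα.extWeight_eq_iff hω hCM (by omega : α.length < Fintype.card X) (s := s)
  constructor
  · intro heq
    obtain ⟨s, hs, h⟩ := forall_extWeight_one_two_eq_of_sq_eq hω hCM hk2 heq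
    exact ⟨s, hs, fun α hα hlen => (hlocal s α hα hlen).1 (h α hα hlen)⟩
  · rintro ⟨s, -, h⟩
    have h₁ : Lw ω (m + 1) = s * Lw ω m :=
      lw_add_eq_mul fun α hα hlen => ((hlocal s α hα hlen).2 (h α hα hlen)).1
    have h₂ : Lw ω (m + 2) = s ^ 2 * Lw ω m :=
      lw_add_eq_mul fun α hα hlen => ((hlocal s α hα hlen).2 (h α hα hlen)).2
    rw [h₁, h₂]
    ring
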